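/- Let ν > 0 and let a, c, b : ℝ → ℝ be differentiable on (0,∞) satisfying, for all x > 0: c'(x) = a(x) − (ν/x)c(x), c'(x) = −b(x) + (ν/x)c(x), a'(x) = −c(x) + ((ν−1)/x)a(x), and b'(x) = c(x) − ((ν+1)/x)b(x). If x₀ > 0 and b(x₀) = 0, then the Turánian Δ(x) = c(x)² − a(x)b(x) is twice differentiable at x₀ and Δ''(x₀) = (4ν/x₀²)·c(x₀)² ≥ 0; in particular Δ''(x₀) > 0 if c(x₀) ≠ 0, so every zero of b at which c does not vanish is a strict relative minimum of Δ. -/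

import Mathlib

/-!
Eliminating `c'` between its two expressions gives the three-term recurrence `a + b = (2ν/x) c`.
With it the derivative of the Turánian collapses to the product form `Δ' = 2ab/x`, so every zero
`x₀` of `b` is a critical point of `Δ`. Differentiating once more gives
`Δ'' = 2c(a - b)/x - 6ab/x²`, where at `x₀` only `2ac/x₀` survives; by the recurrence this is
`4νc²/x₀²`.
-/

open Filter Set Topology

section StrictDerivativeTest

variable {f : ℝ → ℝ} {x₀ : ℝ}

lemma eventually_nhdsLT_lt_of_deriv_neg (hf : ContinuousWithinAt f (Iic x₀) x₀)
    (hf' : ∀ᶠ x in 𝓝[<] x₀, deriv f x < 0) : ∀ᶠ x in 𝓝[<] x₀, f x₀ < f x := by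
  obtain ⟨l, hl, hneg⟩ := (nhdsLT_basis x₀).eventually_iff.mp hf'
  have hcont : ContinuousOn f (Ioc l x₀) := by
    intro y hy
    rcases hy.2.eq_or_lt with rfl | hlt
    · exact hf.mono Ioc_subset_Iic_self
    · exact (differentiableAt_of_deriv_ne_zero
        (hneg ⟨hy.1, hlt⟩).ne).continuousAt.continuousWithinAt
  have hanti : StrictAntiOn f (Ioc l x₀) :=
    strictAntiOn_of_deriv_neg (convex_Ioc l x₀) hcont fun y hy => hneg (by rwa [interior_Ioc] at hy)
  filter_upwards [Ioo_mem_nhdsLT hl] with x hx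
  exact hanti (Ioo_subset_Ioc_self hx) (right_mem_Ioc.mpr hl) hx.2

lemma eventually_nhdsGT_lt_of_deriv_pos (hf : ContinuousWithinAt f (Ici x₀) x₀)
    (hf' : ∀ᶠ x in 𝓝[>] x₀, 0 < deriv f x) : ∀ᶠ x in 𝓝[>] x₀, f x₀ < f x := by
  obtain ⟨r, hr, hpos⟩ := (nhdsGT_basis x₀).eventually_iff.mp hf'
  have hcont : ContinuousOn f (Ico x₀ r) := by
    intro y hy
    rcases hy.1.eq_or_lt with rfl | hlt
    · exact hf.mono Ico_subset_Ici_self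
    · exact (differentiableAt_of_deriv_ne_zero
        (hpos ⟨hlt, hy.2⟩).ne').continuousAt.continuousWithinAt
  have hmono : StrictMonoOn f (Ico x₀ r) :=
    strictMonoOn_of_deriv_pos (convex_Ico x₀ r) hcont fun y hy => hpos (by rwa [interior_Ico] at hy)
  filter_upwards [Ioo_mem_nhdsGT hr] with x hx
  exact hmono (left_mem_Ico.mpr hr) (Ioo_subset_Ico_self hx) hx.1

/-- Mathlib's `isLocalMin_of_deriv_deriv_pos` has only the non-strict conclusion. -/
theorem eventually_nhdsNE_lt_of_deriv_deriv_pos (hf'' : 0 < deriv (deriv f) x₀)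
    (hf' : deriv f x₀ = 0) (hf : ContinuousAt f x₀) : ∀ᶠ x in 𝓝[≠] x₀, f x₀ < f x := by
  have hsign : ∀ᶠ x in 𝓝[≠] x₀, SignType.sign (deriv f x) = SignType.sign (x - x₀) :=
    nhdsWithin_le_nhds (eventually_nhdsWithin_sign_eq_of_deriv_pos hf'' hf')
  rw [← nhdsLT_sup_nhdsGT, eventually_sup]
  exact ⟨eventually_nhdsLT_lt_of_deriv_neg hf.continuousWithinAt
      (deriv_neg_left_of_sign_deriv hsign),
    eventually_nhdsGT_lt_of_deriv_pos hf.continuousWithinAt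
      (deriv_pos_right_of_sign_deriv hsign)⟩

end StrictDerivativeTest

section Turanian

variable {𝕜 : Type*} [NontriviallyNormedField 𝕜] {ν x : 𝕜} {a c b : 𝕜 → 𝕜}

/-- The Turánian `C_ν² - C_{ν-1} C_{ν+1}`, for `a = C_{ν-1}`, `c = C_ν`, `b = C_{ν+1}`. -/
def turanian (a c b : 𝕜 → 𝕜) (x : 𝕜) : 𝕜 :=
  c x ^ 2 - a x * b x

/-- The differential recurrences at the point `x` for three cylinder functions of consecutive
orders, `a = C_{ν-1}`, `c = C_ν` and `b = C_{ν+1}`. Those for `a'` and `b'` which would involve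
the orders `ν - 2` and `ν + 2` are left out. -/
structure CylinderRecurrencesAt (ν : 𝕜) (a c b : 𝕜 → 𝕜) (x : 𝕜) : Prop where
  hasDerivAt_mid_lower : HasDerivAt c (a x - (ν / x) * c x) x
  hasDerivAt_mid_upper : HasDerivAt c (-b x + (ν / x) * c x) x
  hasDerivAt_lower : HasDerivAt a (-c x + ((ν - 1) / x) * a x) x
  hasDerivAt_upper : HasDerivAt b (c x - ((ν + 1) / x) * b x) x

namespace CylinderRecurrencesAt

theorem lower_add_upper (h : CylinderRecurrencesAt ν a c b x) :
    a x + b x = 2 * (ν / x) * c x := by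
  linear_combination h.hasDerivAt_mid_lower.unique h.hasDerivAt_mid_upper

theorem hasDerivAt_lower_mul_upper (h : CylinderRecurrencesAt ν a c b x) :
    HasDerivAt (fun y => a y * b y) (c x * (a x - b x) - 2 * (a x * b x) / x) x := by
  refine (h.hasDerivAt_lower.mul h.hasDerivAt_upper).congr_deriv ?_
  ring

theorem hasDerivAt_turanian (h : CylinderRecurrencesAt ν a c b x) :
    HasDerivAt (turanian a c b) (2 * (a x * b x) / x) x := by
  refine ((h.hasDerivAt_mid_lower.pow 2).sub h.hasDerivAt_lower_mul_upper).congr_deriv ?_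
  push_cast
  linear_combination c x * h.lower_add_upper

theorem hasDerivAt_deriv_turanian (h : ∀ᶠ y in 𝓝 x, CylinderRecurrencesAt ν a c b y)
    (hx : x ≠ 0) :
    HasDerivAt (deriv (turanian a c b))
      (2 * c x * (a x - b x) / x - 6 * (a x * b x) / x ^ 2) x := by
  have hderiv : deriv (turanian a c b) =ᶠ[𝓝 x] fun y => 2 * (a y * b y) / y :=
    h.mono fun y hy => hy.hasDerivAt_turanian.deriv
  have hquot := (h.self_of_nhds.hasDerivAt_lower_mul_upper.const_mul 2).div (hasDerivAt_id x) hx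
  refine (hquot.congr_deriv ?_).congr_of_eventuallyEq hderiv
  simp only [id_eq]
  field_simp
  ring

theorem hasDerivAt_deriv_turanian_of_upper_eq_zero
    (h : ∀ᶠ y in 𝓝 x, CylinderRecurrencesAt ν a c b y) (hx : x ≠ 0) (hb : b x = 0) :
    HasDerivAt (deriv (turanian a c b)) ((4 * ν / x ^ 2) * c x ^ 2) x := by
  have ha : a x = 2 * (ν / x) * c x := by simpa [hb] using h.self_of_nhds.lower_add_upper
  refine (hasDerivAt_deriv_turanian h hx).congr_deriv ?_
  rw [hb, ha]
  ring

end CylinderRecurrencesAt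

end Turanian

/-- If `a, c, b` satisfy the cylinder-function recurrence system on `(0,∞)`,
`ν > 0`, `x₀ > 0` and `b(x₀) = 0`, then the Turánian `Δ(x) = c(x)² − a(x)b(x)`
is twice differentiable at `x₀` with `Δ''(x₀) = (4ν/x₀²)·c(x₀)² ≥ 0`;
if moreover `c(x₀) ≠ 0` then `Δ''(x₀) > 0` and `x₀` is a strict relative
minimum of `Δ`. -/
theorem turanian_min_at_zero_of_b (ν : ℝ) (hν : 0 < ν) (a c b : ℝ → ℝ)
    (hc : ∀ x, 0 < x → HasDerivAt c (a x - (ν / x) * c x) x)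
    (hc' : ∀ x, 0 < x → HasDerivAt c (-b x + (ν / x) * c x) x)
    (ha : ∀ x, 0 < x → HasDerivAt a (-c x + ((ν - 1) / x) * a x) x)
    (hb : ∀ x, 0 < x → HasDerivAt b (c x - ((ν + 1) / x) * b x) x)
    (x₀ : ℝ) (hx₀ : 0 < x₀) (hb₀ : b x₀ = 0) :
    DifferentiableAt ℝ (deriv (fun x => c x ^ 2 - a x * b x)) x₀ ∧
    deriv (deriv (fun x => c x ^ 2 - a x * b x)) x₀ = (4 * ν / x₀ ^ 2) * c x₀ ^ 2 ∧
    0 ≤ deriv (deriv (fun x => c x ^ 2 - a x * b x)) x₀ ∧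
    (c x₀ ≠ 0 →
      0 < deriv (deriv (fun x => c x ^ 2 - a x * b x)) x₀ ∧
      ∃ ε > 0, ∀ x ∈ Set.Ioo (x₀ - ε) (x₀ + ε), x ≠ x₀ →
        c x₀ ^ 2 - a x₀ * b x₀ < c x ^ 2 - a x * b x) := by
  have hrec (x : ℝ) (hx : 0 < x) : CylinderRecurrencesAt ν a c b x :=
    ⟨hc x hx, hc' x hx, ha x hx, hb x hx⟩
  have hΔ : HasDerivAt (turanian a c b) 0 x₀ := by
    simpa [hb₀] using (hrec x₀ hx₀).hasDerivAt_turanian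
  have hΔ' : HasDerivAt (deriv (turanian a c b)) ((4 * ν / x₀ ^ 2) * c x₀ ^ 2) x₀ :=
    CylinderRecurrencesAt.hasDerivAt_deriv_turanian_of_upper_eq_zero
      ((eventually_gt_nhds hx₀).mono hrec) hx₀.ne' hb₀
  have hnonneg : 0 ≤ deriv (deriv (turanian a c b)) x₀ := by
    rw [hΔ'.deriv]
    positivity
  refine ⟨hΔ'.differentiableAt, hΔ'.deriv, hnonneg, fun hc₀ => ?_⟩
  have hpos : 0 < deriv (deriv (turanian a c b)) x₀ := by
    rw [hΔ'.deriv]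
    positivity
  have hmin : ∀ᶠ x in 𝓝[≠] x₀, turanian a c b x₀ < turanian a c b x :=
    eventually_nhdsNE_lt_of_deriv_deriv_pos hpos hΔ.deriv hΔ.continuousAt
  obtain ⟨ε, hε, hlt⟩ :=
    (nhds_basis_Ioo_pos x₀).eventually_iff.mp (eventually_nhdsWithin_iff.mp hmin)
  exact ⟨hpos, ε, hε, fun x hx hne => hlt hx hne⟩
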